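/- Let G be a finite group and B a G-invariant set of 3-element subsets of G satisfying the matroid basis exchange axiom. If f_{g,h} ⊆ B and f_{g',h'} ⊆ B, then f_{g,g'} ⊆ B or f_{g,h'} ⊆ B. -/

import Mathlib

/-- The orbit `f_{g,h} = {{a, a*g, a*h} : a ∈ G}`. -/
def tripleOrbit {G : Type*} [Group G] [DecidableEq G] (g h : G) : Set (Finset G) :=
  {s | ∃ a : G, s = {a, a * g, a * h}}

/-- `B` is invariant under the left multiplication action of `G` on subsets. -/
def LeftInvariant {G : Type*} [Group G] [DecidableEq G] (B : Set (Finset G)) : Prop :=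
  ∀ g : G, ∀ s ∈ B, s.image (fun x => g * x) ∈ B

/-- The (strong) matroid basis exchange axiom. -/
def ExchangeAxiom {α : Type*} [DecidableEq α] (B : Set (Finset α)) : Prop :=
  ∀ X ∈ B, ∀ Y ∈ B, ∀ x ∈ X, x ∉ Y → ∃ y ∈ Y, y ∉ X ∧ insert y (X.erase x) ∈ B

/-- If `f_{g,h} ⊆ B` and `f_{g',h'} ⊆ B`, then `f_{g,g'} ⊆ B` or `f_{g,h'} ⊆ B`. -/
theorem stmt_11 {G : Type*} [Group G] [Fintype G] [DecidableEq G]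
    (B : Set (Finset G)) (hcard : ∀ s ∈ B, s.card = 3)
    (hinv : LeftInvariant B) (hexch : ExchangeAxiom B)
    (g h g' h' : G) (hg : g ≠ 1) (hh : h ≠ 1) (hgh : g ≠ h)
    (hg' : g' ≠ 1) (hh' : h' ≠ 1) (hgh' : g' ≠ h')
    (h1 : tripleOrbit g h ⊆ B) (h2 : tripleOrbit g' h' ⊆ B) :
    tripleOrbit g g' ⊆ B ∨ tripleOrbit g h' ⊆ B := by
  have key : ∀ y : G, ({1, g, y} : Finset G) ∈ B → tripleOrbit g y ⊆ B := by
    rintro y hy s ⟨a, rfl⟩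
    have := hinv a _ hy
    simpa [Finset.image_insert] using this
  have hX : ({1, g, h} : Finset G) ∈ B := h1 ⟨1, by simp⟩
  have hY : ({1, g', h'} : Finset G) ∈ B := h2 ⟨1, by simp⟩
  by_cases hm : h ∈ ({1, g', h'} : Finset G)
  · simp only [Finset.mem_insert, Finset.mem_singleton] at hm
    rcases hm with rfl | rfl | rfl
    · exact absurd rfl hh
    · exact Or.inl h1
    · exact Or.inr h1
  · obtain ⟨y, hyY, hyX, hB⟩ := hexch _ hX _ hY h (by simp) hm
    have he : insert y (({1, g, h} : Finset G).erase h) = {1, g, y} := by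
      ext z
      simp only [Finset.mem_insert, Finset.mem_erase, Finset.mem_singleton]
      grind
    rw [he] at hB
    simp only [Finset.mem_insert, Finset.mem_singleton] at hyY
    rcases hyY with rfl | rfl | rfl
    · simp at hyX
    · exact Or.inl (key _ hB)
    · exact Or.inr (key _ hB)
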